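/- Let p ≥ 1 be a real number. Let k̃ : ℝ × [0,∞) → ℝ be a smooth function, 2π-periodic in its first (angular) variable θ, with k̃(θ,τ) > 0 everywhere, satisfying the rescaled curve-shortening equation ∂k̃/∂τ = p·k̃^{1+1/p}·∂²k̃/∂θ² + p·k̃^{2+1/p} − p·k̃ on ℝ × (0,∞), and suppose sup_θ |k̃(θ,τ) − 1| → 0 as τ → ∞. Then for any constant α with 0 < α < 1 there exists a constant C₄ > 0, depending only on p, α and the initial data k̃(·,0), such that for all τ ≥ 0: (∫₀^{2π} (∂²k̃/∂θ²)² dθ)^{1/2} ≤ C₄·exp(−2αp·τ). -/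

import Mathlib

open Real Filter Set

/-- Wirtinger's inequality for a mean-free periodic function, with the optimal constant for
frequencies at least two and an explicit correction for the first frequency. -/
theorem four_mul_integral_sq_le_integral_deriv_sq {v v' : ℝ → ℝ}
    (hv : ∀ x, HasDerivAt v (v' x) x) (hv' : Continuous v')
    (hper : v (2 * π) = v 0) (hmean : ∫ x in (0:ℝ)..2 * π, v x = 0) :
    4 * (∫ x in (0:ℝ)..2 * π, v x ^ 2) -
      3 / π * ((∫ x in (0:ℝ)..2 * π, v x * cos x) ^ 2 + (∫ x in (0:ℝ)..2 * π, v x * sin x) ^ 2) ≤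
      ∫ x in (0:ℝ)..2 * π, v' x ^ 2 := by
  have hab : (0:ℝ) < 2 * π := by positivity
  have hvc : Continuous v := continuous_iff_continuousAt.2 fun x => (hv x).continuousAt
  have parseval (u : ℝ → ℝ) (hu : Continuous u) :
      HasSum (fun i : ℤ => ‖fourierCoeffOn hab (fun x => (u x : ℂ)) i‖ ^ 2)
        ((2 * π)⁻¹ * ∫ x in (0:ℝ)..2 * π, u x ^ 2) := by
    have hL2 : MeasureTheory.MemLp (fun x => (u x : ℂ)) 2
        (MeasureTheory.volume.restrict (Ioc 0 (2 * π))) := by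
      obtain ⟨C, hC⟩ := isCompact_Icc.exists_bound_of_continuousOn
        (s := Icc 0 (2 * π)) hu.continuousOn
      refine MeasureTheory.MemLp.of_bound (by fun_prop) C ?_
      filter_upwards [MeasureTheory.ae_restrict_mem measurableSet_Ioc] with x hx
      simpa using hC x (Ioc_subset_Icc_self hx)
    simpa using hasSum_sq_fourierCoeffOn hab hL2
  have coeff_sq (n : ℤ) (hn : n = 1 ∨ n = -1) :
      ‖fourierCoeffOn hab (fun x => (v x : ℂ)) n‖ ^ 2 = (2 * π)⁻¹ ^ 2 *
        ((∫ x in (0:ℝ)..2 * π, v x * cos x) ^ 2 + (∫ x in (0:ℝ)..2 * π, v x * sin x) ^ 2) := by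
    have key : fourierCoeffOn hab (fun x => (v x : ℂ)) n = (((2 * π)⁻¹ : ℝ) : ℂ) *
        (((∫ x in (0:ℝ)..2 * π, v x * cos x : ℝ) : ℂ) -
          (n : ℂ) * Complex.I * ((∫ x in (0:ℝ)..2 * π, v x * sin x : ℝ) : ℂ)) := by
      rw [fourierCoeffOn_eq_integral, ← intervalIntegral.integral_ofReal,
        ← intervalIntegral.integral_ofReal, ← intervalIntegral.integral_const_mul,
        ← intervalIntegral.integral_sub]
      · rw [sub_zero, one_div, Complex.real_smul]
        congr 1
        refine intervalIntegral.integral_congr fun x _ => ?_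
        have h2 : 2 * (π:ℂ) * Complex.I * ((-n : ℤ) : ℂ) * x / ((2 * π : ℝ) : ℂ) =
            ((-n * x : ℝ) : ℂ) * Complex.I := by
          have : (π : ℂ) ≠ 0 := by exact_mod_cast pi_ne_zero
          push_cast
          field_simp
        simp only [fourier_coe_apply, smul_eq_mul]
        rw [h2, Complex.exp_mul_I, ← Complex.ofReal_cos, ← Complex.ofReal_sin]
        rcases hn with rfl | rfl <;> simp <;> ring
      · exact Continuous.intervalIntegrable (by fun_prop) _ _
      · exact Continuous.intervalIntegrable (by fun_prop) _ _
    have hn2 : (n : ℝ) ^ 2 = 1 := by rcases hn with rfl | rfl <;> simp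
    rw [key, norm_mul, mul_pow, ← Complex.normSq_eq_norm_sq, ← Complex.normSq_eq_norm_sq]
    congr 1
    · simp [Complex.normSq_apply]; ring
    · simp [Complex.normSq_apply]
      linear_combination (∫ x in (0:ℝ)..2 * π, v x * sin x) ^ 2 * hn2
  have coeff_zero : fourierCoeffOn hab (fun x => (v x : ℂ)) 0 = 0 := by
    rw [fourierCoeffOn_eq_integral]
    simp [intervalIntegral.integral_ofReal, hmean]
  have coeff_deriv (n : ℤ) : ‖fourierCoeffOn hab (fun x => (v' x : ℂ)) n‖ ^ 2 =
      (n : ℝ) ^ 2 * ‖fourierCoeffOn hab (fun x => (v x : ℂ)) n‖ ^ 2 := by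
    have hint : IntervalIntegrable v' MeasureTheory.volume 0 (2 * π) := hv'.intervalIntegrable _ _
    rcases eq_or_ne n 0 with rfl | hn
    · rw [fourierCoeffOn_eq_integral]
      simp [intervalIntegral.integral_ofReal,
        intervalIntegral.integral_eq_sub_of_hasDerivAt (fun x _ => hv x) hint, hper]
    · rw [fourierCoeffOn_of_hasDerivAt hab hn (fun x _ => (hv x).ofReal_comp)
        (Continuous.intervalIntegrable (by fun_prop) _ _), hper]
      have hn' : (n : ℝ) ≠ 0 := by exact_mod_cast hn
      simp [abs_of_pos pi_pos, mul_pow, inv_pow]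
      field_simp
  have hs1 := parseval v hvc
  have hs2 := parseval v' hv'
  simp only [coeff_deriv] at hs2
  set S := (∫ x in (0:ℝ)..2 * π, v x * cos x) ^ 2 + (∫ x in (0:ℝ)..2 * π, v x * sin x) ^ 2
  have hle := hasSum_le (fun n => ?_)
    (((hs1.mul_left 4).sub (hasSum_ite_eq (1:ℤ) (3 * ((2 * π)⁻¹ ^ 2 * S)))).sub
      (hasSum_ite_eq (-1:ℤ) (3 * ((2 * π)⁻¹ ^ 2 * S)))) hs2
  · have h3 := mul_le_mul_of_nonneg_left hle hab.le
    have e1 : 2 * π * (4 * ((2 * π)⁻¹ * ∫ x in (0:ℝ)..2 * π, v x ^ 2) -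
        3 * ((2 * π)⁻¹ ^ 2 * S) - 3 * ((2 * π)⁻¹ ^ 2 * S)) =
        4 * (∫ x in (0:ℝ)..2 * π, v x ^ 2) - 3 / π * S := by
      field_simp
      ring
    rw [e1, mul_inv_cancel_left₀ hab.ne'] at h3
    exact h3
  · by_cases h1 : n = 1
    · simp [h1, coeff_sq 1 (Or.inl rfl)]
      linarith
    by_cases h2 : n = -1
    · simp [h2, coeff_sq (-1) (Or.inr rfl)]
      linarith
    by_cases h0 : n = 0
    · simp [h0, coeff_zero]
    · simp only [h1, h2, if_false, sub_zero]
      have : (4:ℤ) ≤ n ^ 2 := by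
        rcases (by omega : 2 ≤ n ∨ n ≤ -2) with h | h <;> nlinarith
      have : (4:ℝ) ≤ (n:ℝ) ^ 2 := by exact_mod_cast this
      gcongr

theorem sq_intervalIntegral_mul_le {f g : ℝ → ℝ} {a b : ℝ} (hab : a ≤ b) (hf : Continuous f)
    (hg : Continuous g) :
    (∫ x in a..b, f x * g x) ^ 2 ≤ (∫ x in a..b, f x ^ 2) * ∫ x in a..b, g x ^ 2 := by
  have h (r : ℝ) : 0 ≤ (∫ x in a..b, g x ^ 2) * (r * r) + 2 * (∫ x in a..b, f x * g x) * r +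
      ∫ x in a..b, f x ^ 2 := by
    have h0 : 0 ≤ ∫ x in a..b, (f x + r * g x) ^ 2 :=
      intervalIntegral.integral_nonneg hab fun x _ => sq_nonneg _
    have e : (fun x => (f x + r * g x) ^ 2) =
        fun x => r * r * g x ^ 2 + 2 * r * (f x * g x) + f x ^ 2 := by
      funext x; ring
    rw [e, intervalIntegral.integral_add, intervalIntegral.integral_add,
      intervalIntegral.integral_const_mul, intervalIntegral.integral_const_mul] at h0
    · linarith
    all_goals exact Continuous.intervalIntegrable (by fun_prop) _ _
  have := discrim_le_zero h
  rw [discrim] at this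
  linarith

theorem integral_mul_deriv_eq_neg_of_periodic {u v u' v' : ℝ → ℝ} {T : ℝ}
    (hu : ∀ x, HasDerivAt u (u' x) x) (hv : ∀ x, HasDerivAt v (v' x) x)
    (hu' : Continuous u') (hv' : Continuous v') (huT : u T = u 0) (hvT : v T = v 0) :
    ∫ x in (0:ℝ)..T, u x * v' x = -∫ x in (0:ℝ)..T, u' x * v x := by
  rw [intervalIntegral.integral_mul_deriv_eq_deriv_mul (fun x _ => hu x) (fun x _ => hv x)
    (hu'.intervalIntegrable _ _) (hv'.intervalIntegrable _ _), huT, hvT]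
  ring

theorem sq_deriv_le_of_periodic {k k₁ k₂ : ℝ → ℝ} {T : ℝ} (hT : 0 < T)
    (hk : ∀ x, HasDerivAt k (k₁ x) x) (hk₁ : ∀ x, HasDerivAt k₁ (k₂ x) x) (hk₂ : Continuous k₂)
    (hkT : k T = k 0) {x : ℝ} (hx : x ∈ Icc 0 T) :
    k₁ x ^ 2 ≤ T * ∫ y in (0:ℝ)..T, k₂ y ^ 2 := by
  obtain ⟨x₀, hx₀, h0⟩ := exists_hasDerivAt_eq_zero hT
    (fun y _ => (hk y).continuousAt.continuousWithinAt) hkT.symm fun y _ => hk y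
  have h1 : k₁ x = ∫ y in x₀..x, k₂ y := by
    rw [intervalIntegral.integral_eq_sub_of_hasDerivAt (fun y _ => hk₁ y)
      (hk₂.intervalIntegrable _ _), h0, sub_zero]
  have h2 : |k₁ x| ≤ ∫ y in (0:ℝ)..T, |k₂ y| := by
    rw [h1, intervalIntegral.integral_of_le hT.le]
    refine (intervalIntegral.norm_integral_le_integral_norm_uIoc (f := k₂)).trans ?_
    refine MeasureTheory.setIntegral_mono_set
      (hk₂.abs.continuousOn.integrableOn_Icc.mono_set Ioc_subset_Icc_self)
      (.of_forall fun y => abs_nonneg _) (LE.le.eventuallyLE ?_)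
    exact Ioc_subset_Ioc (le_min hx₀.1.le hx.1) (max_le hx₀.2.le hx.2)
  have h3 := sq_intervalIntegral_mul_le hT.le hk₂.abs (continuous_const (y := (1:ℝ)))
  simp only [mul_one, one_pow, sq_abs, intervalIntegral.integral_const, smul_eq_mul,
    sub_zero] at h3
  calc k₁ x ^ 2 = |k₁ x| ^ 2 := (sq_abs _).symm
    _ ≤ (∫ y in (0:ℝ)..T, |k₂ y|) ^ 2 := by gcongr
    _ ≤ _ := by rw [mul_comm]; exact h3

theorem hasDerivAt_le_mul_exp {f f' : ℝ → ℝ} {c T : ℝ}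
    (hf : ∀ t, T ≤ t → HasDerivAt f (f' t) t) (hf' : ∀ t, T ≤ t → f' t ≤ -c * f t)
    {t : ℝ} (ht : T ≤ t) : f t ≤ f T * exp (-c * (t - T)) := by
  have hd (s : ℝ) (hs : T ≤ s) : HasDerivAt (fun s => exp (c * (s - T)) * f s)
      (exp (c * (s - T)) * (c * f s + f' s)) s := by
    have h1 : HasDerivAt (fun s => c * (s - T)) c s := by
      simpa using ((hasDerivAt_id s).sub_const T).const_mul c
    exact (h1.exp.mul (hf s hs)).congr_deriv (by ring)
  have hanti : AntitoneOn (fun s => exp (c * (s - T)) * f s) (Ici T) := by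
    refine antitoneOn_of_hasDerivWithinAt_nonpos (convex_Ici T)
      (fun s hs => (hd s hs).continuousAt.continuousWithinAt)
      (fun s hs => (hd s (interior_subset hs)).hasDerivWithinAt) fun s hs => ?_
    exact mul_nonpos_of_nonneg_of_nonpos (exp_pos _).le
      (by linarith [hf' s (interior_subset hs)])
  have h := hanti self_mem_Ici ht ht
  simp only [sub_self, mul_zero, exp_zero, one_mul] at h
  rw [neg_mul, exp_neg, ← div_eq_mul_inv, le_div_iff₀ (exp_pos _), mul_comm]
  exact h

theorem eq_zero_of_hasDerivAt_self_of_bounded {f : ℝ → ℝ} {T C : ℝ}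
    (hf : ∀ t, T ≤ t → HasDerivAt f (f t) t) (hC : ∀ t, T ≤ t → |f t| ≤ C) : f T = 0 := by
  have h1 (t : ℝ) (ht : T ≤ t) : |f T| ≤ C * exp (-(t - T)) := by
    have e1 := hasDerivAt_le_mul_exp (c := -1) hf (fun t _ => by simp) ht
    have e2 := hasDerivAt_le_mul_exp (f := fun s => -f s) (c := -1) (fun t ht => (hf t ht).neg)
      (fun t _ => by simp) ht
    have e3 : f t = f T * exp (t - T) := by
      simp only [neg_neg, one_mul, neg_mul] at e1 e2
      linarith
    have := hC t ht
    rwa [e3, abs_mul, abs_of_pos (exp_pos _), ← le_div_iff₀ (exp_pos _), div_eq_mul_inv,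
      ← exp_neg] at this
  have h2 : Tendsto (fun t => C * exp (-(t - T))) atTop (nhds 0) := by
    simpa [sub_eq_add_neg] using (tendsto_exp_neg_atTop_nhds_zero.comp
      (tendsto_atTop_add_const_right atTop (-T) tendsto_id)).const_mul C
  have h3 : |f T| ≤ 0 :=
    ge_of_tendsto h2 (by filter_upwards [eventually_ge_atTop T] with t ht using h1 t ht)
  exact abs_nonpos_iff.1 h3

section Slice

variable {p : ℝ} {k k₁ k₂ k₃ : ℝ → ℝ}

theorem integral_rpow_mul_deriv_mul_cos_eq_zero (hp : 0 < p) (hpos : ∀ x, 0 < k x)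
    (hk : ∀ x, HasDerivAt k (k₁ x) x) (hk₁ : Continuous k₁) (hkT : k (2 * π) = k 0)
    (hclosed : ∀ β, ∫ x in (0:ℝ)..2 * π, k x ^ (-(1 / p)) * cos (x - β) = 0) (β : ℝ) :
    ∫ x in (0:ℝ)..2 * π, k x ^ (-(1 + 1 / p)) * k₁ x * cos (x - β) = 0 := by
  have hkc : Continuous k := continuous_iff_continuousAt.2 fun x => (hk x).continuousAt
  have hpow (c : ℝ) : Continuous fun x => k x ^ c := hkc.rpow_const fun x => .inl (hpos x).ne'
  have hu (x : ℝ) : HasDerivAt (fun x => cos (x - β)) (cos (x - (β - π / 2))) x := by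
    have : x - (β - π / 2) = x - β + π / 2 := by ring
    rw [this, cos_add_pi_div_two]
    simpa using ((hasDerivAt_id x).sub_const β).cos
  have hv (x : ℝ) : HasDerivAt (fun x => k x ^ (-(1 / p)))
      (-(1 / p) * (k x ^ (-(1 + 1 / p)) * k₁ x)) x := by
    refine ((hk x).rpow_const (p := -(1 / p)) (.inl (hpos x).ne')).congr_deriv ?_
    rw [show -(1 / p) - 1 = -(1 + 1 / p) by ring]
    ring
  have h := integral_mul_deriv_eq_neg_of_periodic (T := 2 * π) hu hv (by fun_prop)
    (((hpow _).mul hk₁).const_mul _) (by rw [zero_sub, cos_two_pi_sub, cos_neg]) (by rw [hkT])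
  have h2 := hclosed (β - π / 2)
  simp only [mul_comm (cos _)] at h
  rw [h2, neg_zero] at h
  simp only [mul_assoc] at h ⊢
  rw [intervalIntegral.integral_const_mul] at h
  exact (mul_eq_zero.1 h).resolve_left (by simpa using hp.ne')

theorem sq_integral_deriv_mul_cos_le (hpos : ∀ x, 0 < k x) {a ε : ℝ}
    (hk : Continuous k) (hk₁ : Continuous k₁)
    (hε : ∀ x, |k x ^ (-a) - 1| ≤ ε) {β : ℝ}
    (hclosed : ∫ x in (0:ℝ)..2 * π, k x ^ (-a) * k₁ x * cos (x - β) = 0) :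
    (∫ x in (0:ℝ)..2 * π, k₁ x * cos (x - β)) ^ 2 ≤
      2 * π * ε ^ 2 * ∫ x in (0:ℝ)..2 * π, k₁ x ^ 2 := by
  have hpow : Continuous fun x => k x ^ (-a) := hk.rpow_const fun x => .inl (hpos x).ne'
  have h2pi : (0:ℝ) ≤ 2 * π := by positivity
  have e : ∫ x in (0:ℝ)..2 * π, k₁ x * cos (x - β) =
      ∫ x in (0:ℝ)..2 * π, (1 - k x ^ (-a)) * k₁ x * cos (x - β) := by
    have h : (∫ x in (0:ℝ)..2 * π, k₁ x * cos (x - β)) -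
        ∫ x in (0:ℝ)..2 * π, k x ^ (-a) * k₁ x * cos (x - β) =
        ∫ x in (0:ℝ)..2 * π, (1 - k x ^ (-a)) * k₁ x * cos (x - β) := by
      rw [← intervalIntegral.integral_sub]
      · congr 1; funext x; ring
      all_goals exact Continuous.intervalIntegrable (by fun_prop) _ _
    rwa [hclosed, sub_zero] at h
  have h1 : ∫ x in (0:ℝ)..2 * π, ((1 - k x ^ (-a)) * k₁ x) ^ 2 ≤
      ε ^ 2 * ∫ x in (0:ℝ)..2 * π, k₁ x ^ 2 := by
    rw [← intervalIntegral.integral_const_mul]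
    refine intervalIntegral.integral_mono_on h2pi (Continuous.intervalIntegrable (by fun_prop) _ _)
      (Continuous.intervalIntegrable (by fun_prop) _ _) fun x _ => ?_
    have := hε x
    rw [abs_sub_comm] at this
    rw [mul_pow]
    exact mul_le_mul_of_nonneg_right (sq_le_sq' (abs_le.1 this).1 (abs_le.1 this).2) (sq_nonneg _)
  have h2 : ∫ x in (0:ℝ)..2 * π, cos (x - β) ^ 2 ≤ 2 * π := by
    calc _ ≤ ∫ x in (0:ℝ)..2 * π, (1:ℝ) := by
          refine intervalIntegral.integral_mono_on h2pi
            (Continuous.intervalIntegrable (by fun_prop) _ _)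
            (Continuous.intervalIntegrable (by fun_prop) _ _) fun x _ => cos_sq_le_one _
      _ = 2 * π := by simp
  rw [e]
  calc _ ≤ _ := sq_intervalIntegral_mul_le h2pi (by fun_prop) (by fun_prop)
    _ ≤ (ε ^ 2 * ∫ x in (0:ℝ)..2 * π, k₁ x ^ 2) * (2 * π) :=
        mul_le_mul h1 h2 (intervalIntegral.integral_nonneg h2pi fun x _ => sq_nonneg _)
          (mul_nonneg (sq_nonneg _)
            (intervalIntegral.integral_nonneg h2pi fun x _ => sq_nonneg _))
    _ = _ := by ring

theorem neg_integral_mul_velocity_le (hp : 1 ≤ p) {α ε : ℝ} (hε0 : 0 ≤ ε) (hεα : 19 * ε ≤ 1 - α)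
    (hα : 0 ≤ α) (hpos : ∀ x, 0 < k x)
    (hk : ∀ x, HasDerivAt k (k₁ x) x) (hk₁ : ∀ x, HasDerivAt k₁ (k₂ x) x) (hk₂ : Continuous k₂)
    (hkT : k (2 * π) = k 0) (hk₁T : k₁ (2 * π) = k₁ 0)
    (hclosed : ∀ β, ∫ x in (0:ℝ)..2 * π, k x ^ (-(1 / p)) * cos (x - β) = 0)
    (hε : ∀ x, |k x ^ (1 + 1 / p) - 1| ≤ ε) (hε' : ∀ x, |k x ^ (-(1 + 1 / p)) - 1| ≤ ε) :
    -∫ x in (0:ℝ)..2 * π,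
        k₂ x * (p * k x ^ (1 + 1 / p) * k₂ x + p * k x ^ (2 + 1 / p) - p * k x) ≤
      -(p * (1 + α)) * ∫ x in (0:ℝ)..2 * π, k₁ x ^ 2 := by
  have hp0 : 0 < p := by linarith
  have h2pi : (0:ℝ) ≤ 2 * π := by positivity
  have hkc : Continuous k := continuous_iff_continuousAt.2 fun x => (hk x).continuousAt
  have hk₁c : Continuous k₁ := continuous_iff_continuousAt.2 fun x => (hk₁ x).continuousAt
  have hpow (c : ℝ) : Continuous fun x => k x ^ c := hkc.rpow_const fun x => .inl (hpos x).ne'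
  have hpow1 := hpow (1 + 1 / p)
  have hpow2 := hpow (2 + 1 / p)
  have hu (x : ℝ) : HasDerivAt (fun x => p * k x ^ (2 + 1 / p) - p * k x)
      (((2 * p + 1) * k x ^ (1 + 1 / p) - p) * k₁ x) x := by
    refine ((((hk x).rpow_const (p := 2 + 1 / p) (.inl (hpos x).ne')).const_mul p).sub
      ((hk x).const_mul p)).congr_deriv ?_
    rw [show 2 + 1 / p - 1 = 1 + 1 / p by ring]
    field_simp
  have hparts := integral_mul_deriv_eq_neg_of_periodic (T := 2 * π) hu hk₁ (by fun_prop) hk₂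
    (by rw [hkT]) hk₁T
  have hmono : ∫ x in (0:ℝ)..2 * π, (-(p * k x ^ (1 + 1 / p) * k₂ x ^ 2) +
        ((2 * p + 1) * k x ^ (1 + 1 / p) - p) * k₁ x * k₁ x) ≤
      ∫ x in (0:ℝ)..2 * π, (-(p * (1 - ε)) * k₂ x ^ 2 + ((2 * p + 1) * (1 + ε) - p) * k₁ x ^ 2) := by
    refine intervalIntegral.integral_mono_on h2pi (Continuous.intervalIntegrable (by fun_prop) _ _)
      (Continuous.intervalIntegrable (by fun_prop) _ _) fun x _ => ?_
    obtain ⟨h1, h2⟩ := abs_le.1 (hε x)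
    have h3 : 0 ≤ p * k₂ x ^ 2 * (k x ^ (1 + 1 / p) - (1 - ε)) := by
      have : 0 ≤ k x ^ (1 + 1 / p) - (1 - ε) := by linarith
      positivity
    have h4 : 0 ≤ (2 * p + 1) * k₁ x ^ 2 * (1 + ε - k x ^ (1 + 1 / p)) := by
      have : 0 ≤ 1 + ε - k x ^ (1 + 1 / p) := by linarith
      positivity
    linarith
  have hsplit : -∫ x in (0:ℝ)..2 * π,
      k₂ x * (p * k x ^ (1 + 1 / p) * k₂ x + p * k x ^ (2 + 1 / p) - p * k x) =
      ∫ x in (0:ℝ)..2 * π, (-(p * k x ^ (1 + 1 / p) * k₂ x ^ 2) +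
        ((2 * p + 1) * k x ^ (1 + 1 / p) - p) * k₁ x * k₁ x) := by
    rw [intervalIntegral.integral_add, intervalIntegral.integral_neg, ← neg_eq_iff_eq_neg.2 hparts,
      ← neg_add, ← intervalIntegral.integral_add]
    · congr 2; funext x; ring
    all_goals exact Continuous.intervalIntegrable (by fun_prop) _ _
  rw [← hsplit, intervalIntegral.integral_add, intervalIntegral.integral_const_mul,
    intervalIntegral.integral_const_mul] at hmono
  rotate_left
  · exact Continuous.intervalIntegrable (by fun_prop) _ _
  · exact Continuous.intervalIntegrable (by fun_prop) _ _
  have hmean : ∫ x in (0:ℝ)..2 * π, k₁ x = 0 := by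
    rw [intervalIntegral.integral_eq_sub_of_hasDerivAt (fun x _ => hk x)
      (hk₁c.intervalIntegrable _ _), hkT, sub_self]
  have hW := four_mul_integral_sq_le_integral_deriv_sq hk₁ hk₂ hk₁T hmean
  have hmode (β : ℝ) := sq_integral_deriv_mul_cos_le hpos hkc hk₁c hε'
    (integral_rpow_mul_deriv_mul_cos_eq_zero hp0 hpos hk hk₁c hkT hclosed β)
  have hcos := hmode 0
  have hsin := hmode (π / 2)
  simp only [sub_zero, cos_sub_pi_div_two] at hcos hsin
  have hQ : 0 ≤ ∫ x in (0:ℝ)..2 * π, k₁ x ^ 2 :=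
    intervalIntegral.integral_nonneg h2pi fun x _ => sq_nonneg _
  refine hmono.trans ?_
  clear hmono hsplit hparts
  generalize (∫ x in (0:ℝ)..2 * π, k₁ x ^ 2) = Q at *
  generalize (∫ x in (0:ℝ)..2 * π, k₂ x ^ 2) = B at *
  have hB : (4 - 12 * ε ^ 2) * Q ≤ B := by
    have h1 := mul_le_mul_of_nonneg_left (add_le_add hcos hsin)
      (show 0 ≤ 3 / π by positivity)
    have h2 : 3 / π * (2 * π * ε ^ 2 * Q + 2 * π * ε ^ 2 * Q) = 12 * ε ^ 2 * Q := by
      field_simp; ring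
    linarith
  have hε1 : ε ≤ 1 / 19 := by linarith
  have h5 : p * (1 - ε) * ((4 - 12 * ε ^ 2) * Q) ≤ p * (1 - ε) * B :=
    mul_le_mul_of_nonneg_left hB (mul_nonneg hp0.le (by linarith))
  have h6 : 0 ≤
      (p * (1 - ε) * (4 - 12 * ε ^ 2) - ((2 * p + 1) * (1 + ε) - p) - p * (1 + α)) * Q := by
    refine mul_nonneg ?_ hQ
    have h7 : 0 ≤ p * (1 - α - 19 * ε) := mul_nonneg hp0.le (by linarith)
    have h8 : 0 ≤ p * ε * (1 - ε) := mul_nonneg (by positivity) (by linarith)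
    have h9 : 0 ≤ (p - 1) * ε := mul_nonneg (by linarith) hε0
    have h10 : 0 ≤ p * ε ^ 3 := by positivity
    nlinarith
  linarith

theorem sq_integral_sq_deriv_le {T : ℝ} (hT : 0 ≤ T) (hk₁ : ∀ x, HasDerivAt k₁ (k₂ x) x)
    (hk₂ : ∀ x, HasDerivAt k₂ (k₃ x) x) (hk₃ : Continuous k₃)
    (hk₁T : k₁ T = k₁ 0) (hk₂T : k₂ T = k₂ 0) :
    (∫ x in (0:ℝ)..T, k₂ x ^ 2) ^ 2 ≤
      (∫ x in (0:ℝ)..T, k₁ x ^ 2) * ∫ x in (0:ℝ)..T, k₃ x ^ 2 := by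
  have hk₁c : Continuous k₁ := continuous_iff_continuousAt.2 fun x => (hk₁ x).continuousAt
  have hk₂c : Continuous k₂ := continuous_iff_continuousAt.2 fun x => (hk₂ x).continuousAt
  have h := integral_mul_deriv_eq_neg_of_periodic hk₁ hk₂ hk₂c hk₃ hk₁T hk₂T
  simp only [← sq] at h
  rw [← neg_eq_iff_eq_neg.2 h, neg_sq]
  exact sq_intervalIntegral_mul_le hT hk₁c hk₃

theorem neg_integral_deriv_mul_deriv_velocity_le (hp : 1 ≤ p)
    (hk : ∀ x, HasDerivAt k (k₁ x) x) (hk₁ : ∀ x, HasDerivAt k₁ (k₂ x) x)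
    (hk₂ : ∀ x, HasDerivAt k₂ (k₃ x) x) (hk₃ : Continuous k₃) (hpos : ∀ x, 0 < k x)
    (hkT : k (2 * π) = k 0) (hk₁T : k₁ (2 * π) = k₁ 0) (hk₂T : k₂ (2 * π) = k₂ 0)
    (hlow : ∀ x, 1 / 2 ≤ k x ^ (1 + 1 / p)) (hupp : ∀ x, k x ^ (1 + 1 / p) ≤ 2)
    (hupp' : ∀ x, k x ^ (1 / p) ≤ 2) (hsmall : ∫ x in (0:ℝ)..2 * π, k₁ x ^ 2 ≤ 1 / 2048) :
    -∫ x in (0:ℝ)..2 * π, k₃ x * (p * k x ^ (1 + 1 / p) * k₃ x +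
        (p + 1) * k x ^ (1 / p) * k₁ x * k₂ x + ((2 * p + 1) * k x ^ (1 + 1 / p) - p) * k₁ x) ≤
      -(2 * p) * (∫ x in (0:ℝ)..2 * π, k₂ x ^ 2) + 106 * p * ∫ x in (0:ℝ)..2 * π, k₁ x ^ 2 := by
  have hp0 : 0 < p := by linarith
  have h2pi : (0:ℝ) ≤ 2 * π := by positivity
  have hkc : Continuous k := continuous_iff_continuousAt.2 fun x => (hk x).continuousAt
  have hk₁c : Continuous k₁ := continuous_iff_continuousAt.2 fun x => (hk₁ x).continuousAt
  have hk₂c : Continuous k₂ := continuous_iff_continuousAt.2 fun x => (hk₂ x).continuousAt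
  have hpow (c : ℝ) : Continuous fun x => k x ^ c := hkc.rpow_const fun x => .inl (hpos x).ne'
  have hpow1 := hpow (1 + 1 / p)
  have hpow2 := hpow (1 / p)
  set Q := ∫ x in (0:ℝ)..2 * π, k₁ x ^ 2 with hQ
  set B := ∫ x in (0:ℝ)..2 * π, k₂ x ^ 2 with hB
  set D := ∫ x in (0:ℝ)..2 * π, k₃ x ^ 2 with hD
  have hQ0 : 0 ≤ Q := intervalIntegral.integral_nonneg h2pi fun x _ => sq_nonneg _
  have hB0 : 0 ≤ B := intervalIntegral.integral_nonneg h2pi fun x _ => sq_nonneg _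
  have hD0 : 0 ≤ D := intervalIntegral.integral_nonneg h2pi fun x _ => sq_nonneg _
  have hBQD : B ^ 2 ≤ Q * D := sq_integral_sq_deriv_le h2pi hk₁ hk₂ hk₃ hk₁T hk₂T
  have hmono : ∫ x in (0:ℝ)..2 * π, -(k₃ x * (p * k x ^ (1 + 1 / p) * k₃ x +
        (p + 1) * k x ^ (1 / p) * k₁ x * k₂ x + ((2 * p + 1) * k x ^ (1 + 1 / p) - p) * k₁ x)) ≤
      ∫ x in (0:ℝ)..2 * π,
        (-(p / 4) * k₃ x ^ 2 + 32 * p * (8 * B) * k₂ x ^ 2 + 98 * p * k₁ x ^ 2) := by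
    refine intervalIntegral.integral_mono_on h2pi (Continuous.intervalIntegrable (by fun_prop) _ _)
      (Continuous.intervalIntegrable (by fun_prop) _ _) fun x hx => ?_
    have hS : k₁ x ^ 2 ≤ 8 * B := by
      refine (sq_deriv_le_of_periodic (by positivity) hk hk₁ hk₂c hkT hx).trans ?_
      exact mul_le_mul_of_nonneg_right (by linarith [pi_le_four]) hB0
    have aux (c m w : ℝ) (hc : |c| ≤ p * m) :
        -(k₃ x * (c * w)) ≤ p / 8 * k₃ x ^ 2 + 2 * p * m ^ 2 * w ^ 2 := by
      have h1 : -(k₃ x * (c * w)) ≤ |c| * (|k₃ x| * |w|) := by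
        rw [← abs_mul, ← abs_mul]
        exact (neg_le_abs _).trans_eq (by ring_nf)
      have h2 : |c| * (|k₃ x| * |w|) ≤ p * m * (|k₃ x| * |w|) := by gcongr
      have h3 : 0 ≤ p / 8 * (|k₃ x| - 4 * m * |w|) ^ 2 := by positivity
      rw [← sq_abs (k₃ x), ← sq_abs w]
      linarith
    have hP1 := hlow x
    have hP2 := hupp x
    have hR1 : 0 < k x ^ (1 / p) := rpow_pos_of_pos (hpos x) _
    have hR2 := hupp' x
    generalize k x ^ (1 + 1 / p) = P at *
    generalize k x ^ (1 / p) = R at *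
    have a1 := aux ((p + 1) * R) 4 (k₁ x * k₂ x) (by rw [abs_le]; constructor <;> nlinarith)
    have a2 := aux ((2 * p + 1) * P - p) 5 (k₁ x) (by rw [abs_le]; constructor <;> nlinarith)
    have a3 : 0 ≤ p * k₃ x ^ 2 * (P - 1 / 2) :=
      mul_nonneg (by positivity) (by linarith)
    have a4 : 0 ≤ p * k₂ x ^ 2 * (8 * B - k₁ x ^ 2) :=
      mul_nonneg (by positivity) (by linarith)
    have a5 : 0 ≤ p * k₁ x ^ 2 := by positivity
    linarith
  rw [intervalIntegral.integral_neg, intervalIntegral.integral_add, intervalIntegral.integral_add,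
    intervalIntegral.integral_const_mul, intervalIntegral.integral_const_mul,
    intervalIntegral.integral_const_mul, ← hQ, ← hB, ← hD] at hmono
  rotate_left
  iterate 4 exact Continuous.intervalIntegrable (by fun_prop) _ _
  refine hmono.trans ?_
  have h1 : Q * D ≤ 1 / 2048 * D := mul_le_mul_of_nonneg_right hsmall hD0
  have h2 : 16 * B ≤ D + 64 * Q := by
    rw [← pow_le_pow_iff_left₀ (by positivity) (by positivity) two_ne_zero]
    linarith [sq_nonneg (D - 64 * Q)]
  have h3 := mul_le_mul_of_nonneg_left h2 hp0.le
  have h4 := mul_le_mul_of_nonneg_left (hBQD.trans h1) hp0.le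
  linarith

end Slice

theorem hasFDerivWithinAt_uncurry {F : ℝ → ℝ → ℝ} {J : Set ℝ}
    (hF : ContDiffOn ℝ (⊤ : ℕ∞) (fun q : ℝ × ℝ => F q.1 q.2) (univ ×ˢ J))
    (x : ℝ) {t : ℝ} (ht : t ∈ J) :
    HasFDerivWithinAt (fun q : ℝ × ℝ => F q.1 q.2)
      (fderivWithin ℝ (fun q : ℝ × ℝ => F q.1 q.2) (univ ×ˢ J) (x, t)) (univ ×ˢ J) (x, t) :=
  (hF.differentiableOn (by simp) (x, t) ⟨mem_univ _, ht⟩).hasFDerivWithinAt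

theorem hasDerivAt_fst_fderivWithin {F : ℝ → ℝ → ℝ} {J : Set ℝ}
    (hF : ContDiffOn ℝ (⊤ : ℕ∞) (fun q : ℝ × ℝ => F q.1 q.2) (univ ×ˢ J))
    (x : ℝ) {t : ℝ} (ht : t ∈ J) :
    HasDerivAt (fun y => F y t)
      (fderivWithin ℝ (fun q : ℝ × ℝ => F q.1 q.2) (univ ×ˢ J) (x, t) (1, 0)) x :=
  HasFDerivWithinAt.comp_hasDerivAt (f := fun y => (y, t)) x (hasFDerivWithinAt_uncurry hF x ht)
    ((hasDerivAt_id x).prodMk (hasDerivAt_const x t))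
    (Eventually.of_forall fun _ => mk_mem_prod (mem_univ _) ht)

theorem contDiffOn_deriv_fst {F : ℝ → ℝ → ℝ} {J : Set ℝ} (hJ : UniqueDiffOn ℝ J)
    (hF : ContDiffOn ℝ (⊤ : ℕ∞) (fun q : ℝ × ℝ => F q.1 q.2) (univ ×ˢ J)) :
    ContDiffOn ℝ (⊤ : ℕ∞) (fun q : ℝ × ℝ => deriv (fun y => F y q.2) q.1) (univ ×ˢ J) :=
  ((hF.fderivWithin (uniqueDiffOn_univ.prod hJ) (m := (⊤ : ℕ∞)) (by simp)).clm_apply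
    contDiffOn_const).congr fun q hq => (hasDerivAt_fst_fderivWithin hF q.1 hq.2).deriv

theorem contDiff_slice {F : ℝ → ℝ → ℝ} {J : Set ℝ}
    (hF : ContDiffOn ℝ (⊤ : ℕ∞) (fun q : ℝ × ℝ => F q.1 q.2) (univ ×ˢ J)) {t : ℝ} (ht : t ∈ J) :
    ContDiff ℝ (⊤ : ℕ∞) fun y => F y t :=
  contDiffOn_univ.1 <| hF.comp (f := fun y : ℝ => (y, t)) (by fun_prop) fun _ _ => ⟨mem_univ _, ht⟩

theorem hasDerivAt_snd_fderivWithin {F : ℝ → ℝ → ℝ} {J : Set ℝ} (hJ : IsOpen J)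
    (hF : ContDiffOn ℝ (⊤ : ℕ∞) (fun q : ℝ × ℝ => F q.1 q.2) (univ ×ˢ J))
    (x : ℝ) {t : ℝ} (ht : t ∈ J) :
    HasDerivAt (fun s => F x s)
      (fderivWithin ℝ (fun q : ℝ × ℝ => F q.1 q.2) (univ ×ˢ J) (x, t) (0, 1)) t :=
  (hasFDerivWithinAt_uncurry hF x ht).comp_hasDerivAt t
    ((hasDerivAt_const t x).prodMk (hasDerivAt_id t))
    (by filter_upwards [hJ.mem_nhds ht] with s hs using ⟨mem_univ _, hs⟩)

theorem contDiffOn_deriv_snd {F : ℝ → ℝ → ℝ} {J : Set ℝ} (hJ : IsOpen J)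
    (hF : ContDiffOn ℝ (⊤ : ℕ∞) (fun q : ℝ × ℝ => F q.1 q.2) (univ ×ˢ J)) :
    ContDiffOn ℝ (⊤ : ℕ∞) (fun q : ℝ × ℝ => deriv (F q.1) q.2) (univ ×ˢ J) :=
  ((hF.fderivWithin (uniqueDiffOn_univ.prod hJ.uniqueDiffOn) (m := (⊤ : ℕ∞)) (by simp)).clm_apply
    contDiffOn_const).congr fun q hq => (hasDerivAt_snd_fderivWithin hJ hF q.1 hq.2).deriv

theorem hasDerivAt_snd {F : ℝ → ℝ → ℝ} {J : Set ℝ} (hJ : IsOpen J)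
    (hF : ContDiffOn ℝ (⊤ : ℕ∞) (fun q : ℝ × ℝ => F q.1 q.2) (univ ×ˢ J))
    (x : ℝ) {t : ℝ} (ht : t ∈ J) : HasDerivAt (F x) (deriv (F x) t) t :=
  (hasDerivAt_snd_fderivWithin hJ hF x ht).differentiableAt.hasDerivAt

theorem hasDerivAt_snd_deriv_fst {F : ℝ → ℝ → ℝ} {J : Set ℝ} (hJ : IsOpen J)
    (hF : ContDiffOn ℝ (⊤ : ℕ∞) (fun q : ℝ × ℝ => F q.1 q.2) (univ ×ˢ J))
    (x : ℝ) {t : ℝ} (ht : t ∈ J) :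
    HasDerivAt (fun s => deriv (fun y => F y s) x) (deriv (fun y => deriv (F y) t) x) t := by
  set f : ℝ × ℝ → ℝ := fun q => F q.1 q.2
  have hU : IsOpen ((univ : Set ℝ) ×ˢ J) := isOpen_univ.prod hJ
  have hfd (y s : ℝ) (hs : s ∈ J) : fderivWithin ℝ f (univ ×ˢ J) (y, s) = fderiv ℝ f (y, s) :=
    fderivWithin_of_isOpen hU ⟨mem_univ _, hs⟩
  have hat : ContDiffAt ℝ (⊤ : ℕ∞) f (x, t) := hF.contDiffAt (hU.mem_nhds ⟨mem_univ _, ht⟩)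
  have hsymm := hat.isSymmSndFDerivAt
    (by simpa using WithTop.coe_le_coe.2 (le_top : (2 : ℕ∞) ≤ ⊤)) (1, 0) (0, 1)
  have hd : HasFDerivAt (fderiv ℝ f) (fderiv ℝ (fderiv ℝ f) (x, t)) (x, t) :=
    ((hat.fderiv_right (m := (⊤ : ℕ∞)) (by simp)).differentiableAt (by simp)).hasFDerivAt
  have hcurve (v w : ℝ × ℝ) (c : ℝ → ℝ × ℝ) (r : ℝ) (hc : HasDerivAt c v r) (hr : c r = (x, t)) :
      HasDerivAt (fun s => fderiv ℝ f (c s) w) (fderiv ℝ (fderiv ℝ f) (x, t) v w) r := by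
    rw [← hr] at hd ⊢
    exact ((ContinuousLinearMap.apply ℝ ℝ w).hasFDerivAt (x := fderiv ℝ f (c r))).comp_hasDerivAt r
      (hd.comp_hasDerivAt r hc)
  have h1 := hcurve (0, 1) (1, 0) (fun s => (x, s)) t
    ((hasDerivAt_const t x).prodMk (hasDerivAt_id t)) rfl
  have h2 := hcurve (1, 0) (0, 1) (fun y => (y, t)) x
    ((hasDerivAt_id x).prodMk (hasDerivAt_const x t)) rfl
  have h3 : (fun y => deriv (F y) t) = fun y => fderiv ℝ f (y, t) (0, 1) := by
    funext y
    rw [← hfd y t ht]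
    exact (hasDerivAt_snd_fderivWithin hJ hF y ht).deriv
  rw [h3, h2.deriv, hsymm]
  refine h1.congr_of_eventuallyEq ?_
  filter_upwards [hJ.mem_nhds ht] with s hs
  rw [← hfd x s hs]
  exact (hasDerivAt_fst_fderivWithin hF x hs).deriv

theorem hasDerivAt_intervalIntegral_of_contDiffOn {F : ℝ → ℝ → ℝ} {J : Set ℝ} (hJ : IsOpen J)
    (hF : ContDiffOn ℝ (⊤ : ℕ∞) (fun q : ℝ × ℝ => F q.1 q.2) (univ ×ˢ J))
    {t : ℝ} (ht : t ∈ J) (a b : ℝ) :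
    HasDerivAt (fun s => ∫ x in a..b, F x s) (∫ x in a..b, deriv (F x) t) t := by
  obtain ⟨δ, hδ, hball⟩ := Metric.nhds_basis_closedBall.mem_iff.1 (hJ.mem_nhds ht)
  have hF' := contDiffOn_deriv_snd hJ hF
  obtain ⟨C, hC⟩ := (isCompact_uIcc.prod (isCompact_closedBall t δ)).exists_bound_of_continuousOn
    (hF'.continuousOn.mono (prod_mono (subset_univ (uIcc a b)) hball))
  have hcF (s : ℝ) (hs : s ∈ J) : Continuous fun x => F x s := (contDiff_slice hF hs).continuous
  have hcF' : Continuous fun x => deriv (F x) t :=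
    (contDiff_slice (F := fun x s => deriv (F x) s) hF' ht).continuous
  refine (intervalIntegral.hasDerivAt_integral_of_dominated_loc_of_deriv_le
    (F := fun s x => F x s) (F' := fun s x => deriv (F x) s)
    (Metric.closedBall_mem_nhds t hδ) ?_ ((hcF t ht).intervalIntegrable _ _)
    hcF'.aestronglyMeasurable (bound := fun _ => C) ?_ (by simp) ?_).2
  · filter_upwards [hJ.mem_nhds ht] with s hs using (hcF s hs).aestronglyMeasurable
  · exact .of_forall fun x hx s hs => hC (x, s) ⟨uIoc_subset_uIcc hx, hs⟩
  · exact .of_forall fun x _ s hs => hasDerivAt_snd hJ hF x (hball hs)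

theorem hasDerivAt_velocity {p : ℝ} {k k₁ k₂ k₃ : ℝ → ℝ} (hp : 0 < p) (hpos : ∀ x, 0 < k x)
    (hk : ∀ x, HasDerivAt k (k₁ x) x) (hk₂ : ∀ x, HasDerivAt k₂ (k₃ x) x) (x : ℝ) :
    HasDerivAt (fun x => p * k x ^ (1 + 1 / p) * k₂ x + p * k x ^ (2 + 1 / p) - p * k x)
      (p * k x ^ (1 + 1 / p) * k₃ x + (p + 1) * k x ^ (1 / p) * k₁ x * k₂ x +
        ((2 * p + 1) * k x ^ (1 + 1 / p) - p) * k₁ x) x := by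
  have h1 := (hk x).rpow_const (p := 1 + 1 / p) (.inl (hpos x).ne')
  have h2 := (hk x).rpow_const (p := 2 + 1 / p) (.inl (hpos x).ne')
  rw [show 1 + 1 / p - 1 = 1 / p by ring] at h1
  rw [show 2 + 1 / p - 1 = 1 + 1 / p by ring] at h2
  refine ((((h1.const_mul p).mul (hk₂ x)).add (h2.const_mul p)).sub
    ((hk x).const_mul p)).congr_deriv ?_
  have e1 : p * (1 + 1 / p) = p + 1 := by field_simp
  have e2 : p * (2 + 1 / p) = 2 * p + 1 := by field_simp
  linear_combination k₁ x * k x ^ (1 / p) * k₂ x * e1 + k₁ x * k x ^ (1 + 1 / p) * e2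

theorem periodic_deriv {f : ℝ → ℝ} {T : ℝ} (hf : Function.Periodic f T) :
    Function.Periodic (deriv f) T := fun x => by
  rw [← deriv_comp_add_const, funext hf]

theorem hasDerivAt_integral_sq_deriv {F : ℝ → ℝ → ℝ} {J : Set ℝ} {T : ℝ} (hJ : IsOpen J)
    (hF : ContDiffOn ℝ (⊤ : ℕ∞) (fun q : ℝ × ℝ => F q.1 q.2) (univ ×ˢ J))
    (hper : ∀ s, Function.Periodic (fun x => F x s) T) {t : ℝ} (ht : t ∈ J) :
    HasDerivAt (fun s => ∫ x in (0:ℝ)..T, deriv (fun y => F y s) x ^ 2)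
      (2 * -∫ x in (0:ℝ)..T, deriv (deriv fun y => F y t) x * deriv (F x) t) t := by
  have hF1 := contDiffOn_deriv_fst hJ.uniqueDiffOn hF
  have hW := contDiff_slice (F := fun x s => deriv (F x) s) (contDiffOn_deriv_snd hJ hF) ht
  have hf1 := contDiff_slice (F := fun x s => deriv (fun y => F y s) x) hF1 ht
  have hmain := hasDerivAt_intervalIntegral_of_contDiffOn
    (F := fun x s => deriv (fun y => F y s) x ^ 2) hJ (hF1.pow 2) ht 0 T
  refine hmain.congr_deriv ?_
  have hparts := integral_mul_deriv_eq_neg_of_periodic (T := T)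
    (fun x => (hf1.differentiable (by simp) x).hasDerivAt)
    (fun x => (hW.differentiable (by simp) x).hasDerivAt)
    (hf1.continuous_deriv (by simp)) (hW.continuous_deriv (by simp))
    (by simpa using periodic_deriv (hper t) 0)
    (by
      have : F T = F 0 := by funext s; simpa using hper s 0
      rw [this])
  refine Eq.trans ?_ (congrArg (2 * ·) hparts)
  rw [← intervalIntegral.integral_const_mul]
  congr 1
  funext x
  rw [((hasDerivAt_snd_deriv_fst hJ hF x ht).fun_pow 2).deriv]
  ring

theorem integral_rpow_mul_cos_eq_zero {p : ℝ} (hp : 0 < p) {K : ℝ → ℝ → ℝ}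
    (hsmooth : ContDiffOn ℝ (⊤ : ℕ∞) (fun q : ℝ × ℝ => K q.1 q.2) (univ ×ˢ Ioi 0))
    (hper : ∀ τ : ℝ, Function.Periodic (fun θ => K θ τ) (2 * π))
    (hpos : ∀ θ τ : ℝ, 0 < τ → 0 < K θ τ)
    (hpde : ∀ θ : ℝ, ∀ τ ∈ Ioi (0:ℝ),
      deriv (fun s => K θ s) τ =
        p * K θ τ ^ (1 + 1 / p) * deriv (deriv (fun x => K x τ)) θ
          + p * K θ τ ^ (2 + 1 / p) - p * K θ τ)
    {T C : ℝ} (hT : 0 < T) (hC : ∀ θ τ : ℝ, T ≤ τ → K θ τ ^ (-(1 / p)) ≤ C)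
    {t : ℝ} (ht : T ≤ t) (β : ℝ) :
    ∫ x in (0:ℝ)..2 * π, K x t ^ (-(1 / p)) * cos (x - β) = 0 := by
  have h2pi : (0:ℝ) ≤ 2 * π := by positivity
  have hS : ContDiffOn ℝ (⊤ : ℕ∞)
      (fun q : ℝ × ℝ => K q.1 q.2 ^ (-(1 / p)) * cos (q.1 - β)) (univ ×ˢ Ioi 0) :=
    (hsmooth.rpow_const_of_ne fun q hq => (hpos q.1 q.2 hq.2).ne').mul (by fun_prop)
  refine eq_zero_of_hasDerivAt_self_of_bounded (T := t) (C := 2 * π * C)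
    (f := fun s => ∫ x in (0:ℝ)..2 * π, K x s ^ (-(1 / p)) * cos (x - β)) ?_ ?_
  · intro s hts
    have hs : s ∈ Ioi (0:ℝ) := hT.trans_le (ht.trans hts)
    refine (hasDerivAt_intervalIntegral_of_contDiffOn
      (F := fun x s => K x s ^ (-(1 / p)) * cos (x - β)) isOpen_Ioi hS hs 0 (2 * π)).congr_deriv ?_
    have hk := contDiff_slice hsmooth hs
    have hk1 := contDiff_slice (F := fun x s => deriv (fun y => K y s) x)
      (contDiffOn_deriv_fst isOpen_Ioi.uniqueDiffOn hsmooth) hs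
    have hk2 : Continuous (deriv (deriv fun x => K x s)) := hk1.continuous_deriv (by simp)
    have hkc := hk.continuous
    have hpow : Continuous fun x => K x s ^ (-(1 / p)) :=
      hkc.rpow_const fun x => .inl (hpos x s hs).ne'
    have hzero : ∫ x in (0:ℝ)..2 * π,
        (deriv (deriv fun x => K x s) x + K x s) * cos (x - β) = 0 := by
      have hd (x : ℝ) : HasDerivAt (fun x => deriv (fun x => K x s) x * cos (x - β) +
          K x s * sin (x - β)) ((deriv (deriv fun x => K x s) x + K x s) * cos (x - β)) x := by
        have d0 := (hasDerivAt_id' x).sub_const β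
        have d1 := (hk.differentiable (by simp) x).hasDerivAt
        have d2 := (hk1.differentiable (by simp) x).hasDerivAt
        exact ((d2.mul d0.cos).add (d1.mul d0.sin)).congr_deriv (by ring)
      rw [intervalIntegral.integral_eq_sub_of_hasDerivAt (fun x _ => hd x)
        (Continuous.intervalIntegrable (by fun_prop) _ _)]
      have e0 : K (2 * π) s = K 0 s := by simpa using hper s 0
      have e1 : deriv (fun x => K x s) (2 * π) = deriv (fun x => K x s) 0 := by
        simpa using periodic_deriv (hper s) 0
      rw [e0, e1, zero_sub, cos_two_pi_sub, sin_two_pi_sub, cos_neg, sin_neg, sub_self]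
    have hsum : ∫ x in (0:ℝ)..2 * π, K x s ^ (-(1 / p)) * cos (x - β) =
        ∫ x in (0:ℝ)..2 * π, (K x s ^ (-(1 / p)) * cos (x - β) -
          (deriv (deriv fun x => K x s) x + K x s) * cos (x - β)) := by
      rw [intervalIntegral.integral_sub, hzero, sub_zero]
      all_goals exact Continuous.intervalIntegrable (by fun_prop) _ _
    rw [hsum]
    congr 1
    funext x
    have hx := hpos x s hs
    have d := (((hasDerivAt_snd isOpen_Ioi hsmooth x hs).rpow_const (p := -(1 / p))
      (.inl hx.ne')).mul_const (cos (x - β))).deriv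
    rw [d, hpde x s hs]
    have e1 : K x s ^ (-(1 / p) - 1) * K x s ^ (1 + 1 / p) = 1 := by
      rw [← rpow_add hx, ← rpow_zero (K x s)]; congr 1; ring
    have e2 : K x s ^ (-(1 / p) - 1) * K x s ^ (2 + 1 / p) = K x s := by
      rw [← rpow_add hx]; conv_rhs => rw [← rpow_one (K x s)]
      congr 1; ring
    have e3 : K x s ^ (-(1 / p) - 1) * K x s = K x s ^ (-(1 / p)) := by
      rw [← rpow_add_one hx.ne', sub_add_cancel]
    have e4 : p * (1 / p) = 1 := by field_simp
    linear_combination -(1 / p) * p * cos (x - β) *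
      (deriv (deriv fun x => K x s) x * e1 + e2 - e3) -
      cos (x - β) * (deriv (deriv fun x => K x s) x + K x s - K x s ^ (-(1 / p))) * e4
  · intro s hts
    have hs : 0 < s := hT.trans_le (ht.trans hts)
    have h := intervalIntegral.norm_integral_le_of_norm_le_const (a := 0) (b := 2 * π) (C := C)
      (f := fun x => K x s ^ (-(1 / p)) * cos (x - β)) fun x _ => ?_
    · rwa [sub_zero, abs_of_nonneg h2pi, mul_comm C] at h
    · have h0 := (rpow_pos_of_pos (hpos x s hs) (-(1 / p))).le
      rw [norm_mul, norm_of_nonneg h0]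
      exact (mul_le_of_le_one_right h0 (abs_cos_le_one _)).trans (hC x s (ht.trans hts))

theorem eventually_abs_rpow_sub_one_le {K : ℝ → ℝ → ℝ}
    (hconv : TendstoUniformly (fun τ θ => K θ τ) (fun _ => 1) atTop) (c : ℝ) {ε : ℝ} (hε : 0 < ε) :
    ∀ᶠ τ in atTop, ∀ θ, |K θ τ ^ c - 1| ≤ ε := by
  have hcont : ContinuousAt (fun x : ℝ => x ^ c) 1 := continuousAt_rpow_const _ _ (.inl one_ne_zero)
  obtain ⟨δ, hδ, h⟩ := Metric.continuousAt_iff.1 hcont ε hε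
  filter_upwards [Metric.tendstoUniformly_iff.1 hconv δ hδ] with τ hτ θ
  have := h (by rw [dist_comm]; exact hτ θ)
  rw [one_rpow, Real.dist_eq] at this
  exact this.le

theorem exists_bound_integral_sq_of_continuousOn {F : ℝ → ℝ → ℝ} {T L : ℝ} (hL : 0 ≤ L)
    (hF : ContinuousOn (fun q : ℝ × ℝ => F q.1 q.2) (univ ×ˢ Ici 0)) :
    ∃ C, 0 ≤ C ∧ ∀ t ∈ Icc 0 T, ∫ x in (0:ℝ)..L, F x t ^ 2 ≤ C := by
  obtain ⟨C, hC⟩ := (isCompact_Icc.prod isCompact_Icc).exists_bound_of_continuousOn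
    (hF.mono (prod_mono (subset_univ (Icc 0 L)) (Icc_subset_Ici_self : Icc 0 T ⊆ Ici 0)))
  refine ⟨L * C ^ 2, by positivity, fun t ht => ?_⟩
  have hc : Continuous fun x => F x t :=
    hF.comp_continuous (f := fun x : ℝ => (x, t)) (by fun_prop) fun x => ⟨mem_univ _, ht.1⟩
  calc _ ≤ ∫ x in (0:ℝ)..L, C ^ 2 := by
        refine intervalIntegral.integral_mono_on hL (Continuous.intervalIntegrable (by fun_prop) _ _)
          (Continuous.intervalIntegrable (by fun_prop) _ _) fun x hx => ?_
        exact sq_le_sq' (abs_le.1 (hC (x, t) ⟨hx, ht⟩)).1 (abs_le.1 (hC (x, t) ⟨hx, ht⟩)).2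
    _ = _ := by simp

/-- Lemma 3.6: exponential decay of the `L²` norm of the second angular
derivative of the normalized curvature. -/
theorem second_derivative_L2_decay
    (p : ℝ) (hp : 1 ≤ p) (K : ℝ → ℝ → ℝ)
    (hsmooth : ContDiffOn ℝ (⊤ : ℕ∞) (fun q : ℝ × ℝ => K q.1 q.2) (univ ×ˢ Ici 0))
    (hper : ∀ τ : ℝ, Function.Periodic (fun θ => K θ τ) (2 * π))
    (hpos : ∀ θ τ : ℝ, 0 ≤ τ → 0 < K θ τ)
    (hpde : ∀ θ : ℝ, ∀ τ ∈ Ioi (0:ℝ),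
      deriv (fun s => K θ s) τ =
        p * K θ τ ^ (1 + 1 / p) * deriv (deriv (fun x => K x τ)) θ
          + p * K θ τ ^ (2 + 1 / p) - p * K θ τ)
    (hconv : TendstoUniformly (fun τ θ => K θ τ) (fun _ => 1) atTop) :
    ∀ α : ℝ, 0 < α → α < 1 → ∃ C : ℝ, 0 < C ∧ ∀ τ : ℝ, 0 ≤ τ →
      (∫ θ in (0:ℝ)..(2 * π), (deriv (deriv (fun x => K x τ)) θ) ^ 2) ^ ((1:ℝ) / 2) ≤
        C * Real.exp (-2 * α * p * τ) := by
  intro α hα0 hα1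
  have hp0 : 0 < p := by linarith
  have h2pi : (0:ℝ) ≤ 2 * π := by positivity
  have hU : ContDiffOn ℝ (⊤ : ℕ∞) (fun q : ℝ × ℝ => K q.1 q.2) (univ ×ˢ Ioi 0) :=
    hsmooth.mono (prod_mono le_rfl Ioi_subset_Ici_self)
  have hU₁ := contDiffOn_deriv_fst isOpen_Ioi.uniqueDiffOn hU
  have hU₂ := contDiffOn_deriv_fst (F := fun x s => deriv (fun y => K y s) x)
    isOpen_Ioi.uniqueDiffOn hU₁
  have hd₀ (t : ℝ) (ht : 0 < t) (x : ℝ) :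
      HasDerivAt (fun y => K y t) (deriv (fun y => K y t) x) x :=
    ((contDiff_slice hU ht).differentiable (by simp) x).hasDerivAt
  have hd₁ (t : ℝ) (ht : 0 < t) (x : ℝ) :
      HasDerivAt (deriv fun y => K y t) (deriv (deriv fun y => K y t) x) x :=
    ((contDiff_slice (F := fun x s => deriv (fun y => K y s) x) hU₁ ht).differentiable
      (by simp) x).hasDerivAt
  have hc₂ (t : ℝ) (ht : 0 < t) : ContDiff ℝ (⊤ : ℕ∞) (deriv (deriv fun y => K y t)) :=
    contDiff_slice (F := fun x s => deriv (fun y => deriv (fun z => K z s) y) x) hU₂ ht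
  have hd₂ (t : ℝ) (ht : 0 < t) (x : ℝ) :
      HasDerivAt (deriv (deriv fun y => K y t)) (deriv (deriv (deriv fun y => K y t)) x) x :=
    ((hc₂ t ht).differentiable (by simp) x).hasDerivAt
  have hper₁ (t : ℝ) : Function.Periodic (fun x => deriv (fun y => K y t) x) (2 * π) :=
    periodic_deriv (hper t)
  have hT₀ (t : ℝ) : K (2 * π) t = K 0 t := by simpa using hper t 0
  have hT₁ (t : ℝ) : deriv (fun y => K y t) (2 * π) = deriv (fun y => K y t) 0 := by
    simpa using hper₁ t 0
  have hT₂ (t : ℝ) : deriv (deriv fun y => K y t) (2 * π) = deriv (deriv fun y => K y t) 0 := by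
    simpa using periodic_deriv (hper₁ t) 0
  set Q : ℝ → ℝ := fun s => ∫ x in (0:ℝ)..2 * π, deriv (fun y => K y s) x ^ 2 with hQ
  set B : ℝ → ℝ := fun s => ∫ x in (0:ℝ)..2 * π, deriv (deriv fun y => K y s) x ^ 2 with hB
  have hQ0 (s : ℝ) : 0 ≤ Q s := intervalIntegral.integral_nonneg h2pi fun x _ => sq_nonneg _
  have hB0 (s : ℝ) : 0 ≤ B s := intervalIntegral.integral_nonneg h2pi fun x _ => sq_nonneg _
  have hQd (t : ℝ) (ht : 0 < t) := hasDerivAt_integral_sq_deriv isOpen_Ioi hU hper (mem_Ioi.2 ht)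
  have hBd (t : ℝ) (ht : 0 < t) := hasDerivAt_integral_sq_deriv
    (F := fun x s => deriv (fun y => K y s) x) isOpen_Ioi hU₁ hper₁ (mem_Ioi.2 ht)
  have hmixed (t : ℝ) (ht : 0 < t) (x : ℝ) : deriv (fun s => deriv (fun y => K y s) x) t =
      p * K x t ^ (1 + 1 / p) * deriv (deriv (deriv fun y => K y t)) x +
        (p + 1) * K x t ^ (1 / p) * deriv (fun y => K y t) x * deriv (deriv fun y => K y t) x +
        ((2 * p + 1) * K x t ^ (1 + 1 / p) - p) * deriv (fun y => K y t) x := by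
    rw [(hasDerivAt_snd_deriv_fst isOpen_Ioi hU x ht).deriv, funext fun y => hpde y t ht]
    exact (hasDerivAt_velocity hp0 (fun y => hpos y t ht.le) (hd₀ t ht) (hd₂ t ht) x).deriv
  obtain ⟨ε, hε0, hεα⟩ : ∃ ε, 0 < ε ∧ 19 * ε ≤ 1 - α :=
    ⟨(1 - α) / 19, by linarith, by linarith⟩
  obtain ⟨T₁, hT₁'⟩ := eventually_atTop.1 <|
    ((eventually_abs_rpow_sub_one_le hconv (1 + 1 / p) hε0).and
    (eventually_abs_rpow_sub_one_le hconv (-(1 + 1 / p)) hε0)).and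
    (((eventually_abs_rpow_sub_one_le hconv (1 / p) one_pos).and
    (eventually_abs_rpow_sub_one_le hconv (-(1 / p)) one_pos)).and (eventually_gt_atTop 0))
  have hT₁0 : 0 < T₁ := (hT₁' T₁ le_rfl).2.2
  have hQle (t : ℝ) (ht : T₁ ≤ t) := neg_integral_mul_velocity_le hp hε0.le hεα hα0.le
    (fun x => hpos x t (hT₁0.le.trans ht)) (hd₀ t (hT₁0.trans_le ht)) (hd₁ t (hT₁0.trans_le ht))
    (hc₂ t (hT₁0.trans_le ht)).continuous (hT₀ t) (hT₁ t)
    (integral_rpow_mul_cos_eq_zero hp0 hU hper (fun x s hs => hpos x s hs.le) hpde hT₁0 (C := 2)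
      (fun x s hs => by linarith [(abs_le.1 ((hT₁' s hs).2.1.2 x)).2]) ht)
    (hT₁' t ht).1.1 (hT₁' t ht).1.2
  have hQd' (t : ℝ) (ht : T₁ ≤ t) :
      ∃ Q', HasDerivAt Q Q' t ∧ Q' ≤ -(2 * p * (1 + α)) * Q t := by
    refine ⟨_, hQd t (hT₁0.trans_le ht), ?_⟩
    have h := hQle t ht
    simp only [← hpde _ t (hT₁0.trans_le ht)] at h
    linarith
  choose! Q' hQ'd hQ'le using hQd'
  obtain ⟨T, hTT₁, hT⟩ : ∃ T, T₁ ≤ T ∧ ∀ t, T ≤ t → Q t ≤ 1 / 2048 := by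
    have hlim : Tendsto (fun t => Q T₁ * exp (-(2 * p * (1 + α)) * (t - T₁))) atTop (nhds 0) := by
      rw [← mul_zero (Q T₁)]
      refine (tendsto_exp_atBot.comp ?_).const_mul _
      exact (tendsto_atTop_add_const_right _ (-T₁) tendsto_id).const_mul_atTop_of_neg
        (neg_neg_of_pos (by positivity))
    obtain ⟨T, hT⟩ := eventually_atTop.1 (hlim.eventually_le_const (by norm_num : 0 < (1:ℝ) / 2048))
    refine ⟨max T₁ T, le_max_left _ _, fun t ht => ?_⟩
    exact (hasDerivAt_le_mul_exp hQ'd hQ'le ((le_max_left _ _).trans ht)).trans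
      (hT t ((le_max_right _ _).trans ht))
  have hT0 : 0 < T := hT₁0.trans_le hTT₁
  have hBd' (t : ℝ) (ht : T ≤ t) :
      ∃ B', HasDerivAt B B' t ∧ B' ≤ -(4 * p) * B t + 212 * p * Q t := by
    have ht0 : 0 < t := hT0.trans_le ht
    have hε1 : ε ≤ 1 / 2 := by linarith
    obtain ⟨⟨b1, -⟩, ⟨b2, -⟩, -⟩ := hT₁' t (hTT₁.trans ht)
    refine ⟨_, hBd t ht0, ?_⟩
    have h := neg_integral_deriv_mul_deriv_velocity_le hp (hd₀ t ht0) (hd₁ t ht0) (hd₂ t ht0)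
      ((hc₂ t ht0).continuous_deriv (by simp)) (fun x => hpos x t ht0.le) (hT₀ t) (hT₁ t) (hT₂ t)
      (fun x => by linarith [(abs_le.1 (b1 x)).1]) (fun x => by linarith [(abs_le.1 (b1 x)).2])
      (fun x => by linarith [(abs_le.1 (b2 x)).2]) (hT t ht)
    simp only [← hmixed t ht0] at h
    linarith
  choose! B' hB'd hB'le using hBd'
  have hα : 0 < 1 - α := by linarith
  set N := 106 / (1 - α) with hN
  have hN0 : 0 < N := by positivity
  have hH (t : ℝ) (ht : T ≤ t) :
      B t + N * Q t ≤ (B T + N * Q T) * exp (-(4 * α * p) * (t - T)) := by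
    refine hasDerivAt_le_mul_exp (f := fun s => B s + N * Q s) (f' := fun s => B' s + N * Q' s)
      (fun s hs => (hB'd s hs).add ((hQ'd s (hTT₁.trans hs)).const_mul N)) (fun s hs => ?_) ht
    have h1 := hB'le s hs
    have h2 := mul_le_mul_of_nonneg_left (hQ'le s (hTT₁.trans hs)) hN0.le
    have h3 : N * (1 - α) = 106 := div_mul_cancel₀ _ hα.ne'
    have h4 : 0 ≤ p * (1 - α) * B s := mul_nonneg (by positivity) (hB0 s)
    have h5 : p * Q s * (N * (1 - α)) = p * Q s * 106 := by rw [h3]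
    linarith
  obtain ⟨C₀, hC₀0, hC₀⟩ := exists_bound_integral_sq_of_continuousOn (T := T) (L := 2 * π)
    (F := fun x s => deriv (deriv fun y => K y s) x) h2pi
    (contDiffOn_deriv_fst (F := fun x s => deriv (fun y => K y s) x) (uniqueDiffOn_Ici 0)
      (contDiffOn_deriv_fst (uniqueDiffOn_Ici 0) hsmooth)).continuousOn
  set M := (B T + N * Q T + C₀ + 1) * exp (4 * α * p * T) with hM
  have hHT : 0 ≤ B T + N * Q T := add_nonneg (hB0 T) (mul_nonneg hN0.le (hQ0 T))
  have hM0 : 0 < M := mul_pos (by linarith) (exp_pos _)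
  have hfinal (t : ℝ) (ht : 0 ≤ t) : B t ≤ M * exp (-(4 * α * p) * t) := by
    have e : M * exp (-(4 * α * p) * t) =
        (B T + N * Q T + C₀ + 1) * exp (-(4 * α * p) * (t - T)) := by
      rw [hM, mul_assoc, ← exp_add]; congr 2; ring
    rw [e]
    rcases le_total T t with h | h
    · calc B t ≤ B t + N * Q t := le_add_of_nonneg_right (mul_nonneg hN0.le (hQ0 t))
        _ ≤ _ := hH t h
        _ ≤ _ := mul_le_mul_of_nonneg_right (by linarith) (exp_pos _).le
    · have h1 : 1 ≤ exp (-(4 * α * p) * (t - T)) := by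
        refine one_le_exp (mul_nonneg_of_nonpos_of_nonpos ?_ (by linarith))
        rw [neg_nonpos]
        positivity
      calc B t ≤ C₀ := hC₀ t ⟨ht, h⟩
        _ ≤ (B T + N * Q T + C₀ + 1) * 1 := by linarith
        _ ≤ _ := by gcongr
  refine ⟨√M, sqrt_pos.2 hM0, fun τ hτ => ?_⟩
  rw [← sqrt_eq_rpow]
  refine (sqrt_le_sqrt (hfinal τ hτ)).trans_eq ?_
  rw [sqrt_mul hM0.le, ← exp_half]
  congr 2
  ring
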